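/- arXiv:2406.03021 — 2 statements merged into one kernel-verified Lean document; each statement's English description precedes it below -/
import Mathlib

section
/- For every non-crossing partition σ of {1̄,…,n̄}, the concordance vector w_σ lies in the image of ⋀^{n-1}V inside ⋀^{n-1}ℝ^{2n}, and all of its coordinates with respect to the basis of ⋀^{n-1}V induced by v_1,…,v_{2n−2} are equal to 0 or 1. That is, there exist coefficients c_J ∈ {0,1}, indexed by (n−1)-element subsets J = {j_1 < … < j_{n−1}} of {1,…,2n−2}, such that w_σ = Σ_J c_J · v_{j_1} ∧ v_{j_2} ∧ … ∧ v_{j_{n−1}}. -/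
open scoped Classical

noncomputable section

/-- `P` is a set partition of the finite ground set `G` (of integers): its blocks are nonempty
subsets of `G`, and every element of `G` lies in exactly one block. -/
def IsPartitionOf (G : Finset ℕ) (P : Finset (Finset ℕ)) : Prop :=
  (∀ B ∈ P, B.Nonempty) ∧ (∀ B ∈ P, B ⊆ G) ∧ ∀ x ∈ G, ∃! B, B ∈ P ∧ x ∈ B

/-- A collection of blocks is non-crossing: there are no `a < b < c < d` with `a, c` in one
block and `b, d` in a different block. -/
def NonCrossing (P : Finset (Finset ℕ)) : Prop :=
  ∀ a b c d : ℕ, a < b → b < c → c < d →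
    ∀ B₁ ∈ P, ∀ B₂ ∈ P, a ∈ B₁ → c ∈ B₁ → b ∈ B₂ → d ∈ B₂ → B₁ = B₂

/-- The set `{1, 3, …, 2n-1}` of "barred" boundary indices `k̄ = 2k-1`. -/
def oddSet (n : ℕ) : Finset ℕ := (Finset.range n).image fun k => 2 * k + 1

/-- The set `{2, 4, …, 2n}` of "tilde" boundary indices `k̃ = 2k`. -/
def evenSet (n : ℕ) : Finset ℕ := (Finset.range n).image fun k => 2 * k + 2

/-- `σ` is a non-crossing partition of `{1̄,…,n̄}` and `σd` is its dual: a non-crossing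
partition of `{1̃,…,ñ}` such that the merged partition `σ ∪ σd` is non-crossing and the
numbers of blocks add up to `n + 1`. -/
def IsNCPair (n : ℕ) (σ σd : Finset (Finset ℕ)) : Prop :=
  IsPartitionOf (oddSet n) σ ∧ NonCrossing σ ∧
    IsPartitionOf (evenSet n) σd ∧ NonCrossing σd ∧
    NonCrossing (σ ∪ σd) ∧ σ.card + σd.card = n + 1

/-- An `(n-1)`-element subset `I ⊆ {1,…,2n}` is concordant with `σ` if every block of `σ`
and every block of the dual `σd` contains exactly one element not in `I`. -/
def ConcordantWith (σ σd : Finset (Finset ℕ)) (I : Finset ℕ) : Prop :=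
  ∀ B ∈ σ ∪ σd, (B \ I).card = 1

/-- `stdE n i` is the `i`-th standard basis vector (1-indexed) of `ℝ^{2n}`. -/
def stdE (n i : ℕ) : Fin (2 * n) → ℝ := fun t => if (t : ℕ) + 1 = i then 1 else 0

/-- The wedge `e_{i_1} ∧ … ∧ e_{i_k}` over the increasing enumeration `i_1 < … < i_k`
of a finite set `I` of (1-indexed) indices. -/
def finsetWedge (n k : ℕ) (I : Finset ℕ) : ExteriorAlgebra ℝ (Fin (2 * n) → ℝ) :=
  ExteriorAlgebra.ιMulti ℝ k fun p => stdE n ((I.sort (· ≤ ·)).getD p.val 0)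

/-- The concordance vector `w_σ = Σ_I e_I ∈ ⋀^{n-1} ℝ^{2n}`, the sum over all
`(n-1)`-element subsets `I` of `{1,…,2n}` concordant with `σ`. -/
def concVec (n : ℕ) (σ σd : Finset (Finset ℕ)) : ExteriorAlgebra ℝ (Fin (2 * n) → ℝ) :=
  ∑ I ∈ ((Finset.Icc 1 (2 * n)).powersetCard (n - 1)).filter (ConcordantWith σ σd),
    finsetWedge n (n - 1) I

end
noncomputable section

/-- The basis vectors `v_k = e_k + e_{k+2}`, `k = 1, …, 2n-2`, of the subspace `V`. -/
def vVec (n k : ℕ) : Fin (2 * n) → ℝ := stdE n k + stdE n (k + 2)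

/-- The wedge `v_{j_1} ∧ … ∧ v_{j_k}` over the increasing enumeration `j_1 < … < j_k`
of a finite set `J` of (1-indexed) indices. -/
def vFinsetWedge (n k : ℕ) (J : Finset ℕ) : ExteriorAlgebra ℝ (Fin (2 * n) → ℝ) :=
  ExteriorAlgebra.ιMulti ℝ k fun p => vVec n ((J.sort (· ≤ ·)).getD p.val 0)

end

/-! ### Auxiliary material for the proof -/

/-- Abstract data of a non-crossing pair: the "same block" relation and the arcs
`(β p, ν p)` joining consecutive elements of a block, listed by increasing left end. -/
structure ArcCtx (n k : ℕ) (R : ℕ → ℕ → Prop) (β ν : Fin k → ℕ) : Prop where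
  rng : ∀ x y, R x y → 1 ≤ x ∧ x ≤ 2 * n
  refl : ∀ x, 1 ≤ x → x ≤ 2 * n → R x x
  symm : ∀ x y, R x y → R y x
  trans : ∀ x y z, R x y → R y z → R x z
  par : ∀ x y, R x y → x % 2 = y % 2
  nc : ∀ a b c d, a < b → b < c → c < d → R a c → R b d → R a b
  mono : StrictMono β
  start : ∀ x y, R x y → x < y → ∃ p, β p = x
  arcR : ∀ p, R (β p) (ν p)
  arcLt : ∀ p, β p < ν p
  arcMin : ∀ p y, R (β p) y → β p < y → ν p ≤ y
  hk : k + 1 = n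

/-- Number of arcs inside the interval `[x, y]`. -/
def arcCount {k : ℕ} (β ν : Fin k → ℕ) (x y : ℕ) : ℕ :=
  (Finset.univ.filter fun p : Fin k => x ≤ β p ∧ ν p ≤ y).card

namespace ArcCtx

variable {n k : ℕ} {R : ℕ → ℕ → Prop} {β ν : Fin k → ℕ}

theorem arcTwo (H : ArcCtx n k R β ν) (p : Fin k) : β p + 2 ≤ ν p := by
  have := H.par _ _ (H.arcR p)
  have := H.arcLt p
  omega

theorem rng' (H : ArcCtx n k R β ν) {x y : ℕ} (h : R x y) : 1 ≤ y ∧ y ≤ 2 * n :=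
  H.rng _ _ (H.symm _ _ h)

theorem pred (H : ArcCtx n k R β ν) {c y : ℕ} (h : R c y) (hcy : c < y) :
    ∃ p, ν p = y ∧ c ≤ β p ∧ R c (β p) := by
  have hne : ((Finset.range y).filter fun z => R z y).Nonempty := ⟨c, by simp [h, hcy]⟩
  obtain ⟨z, hz, hmax⟩ := Finset.exists_max_image _ id hne
  simp only [Finset.mem_filter, Finset.mem_range, id] at hz hmax
  obtain ⟨p, rfl⟩ := H.start z y hz.2 hz.1
  refine ⟨p, ?_, hmax c ⟨hcy, h⟩, H.trans _ _ _ h (H.symm _ _ hz.2)⟩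
  refine le_antisymm (H.arcMin p y hz.2 hz.1) ?_
  by_contra hlt
  have h1 := hmax (ν p) ⟨by omega, H.trans _ _ _ (H.symm _ _ (H.arcR p)) hz.2⟩
  have := H.arcLt p
  omega

theorem nest (H : ArcCtx n k R β ν) {p q : Fin k} (h1 : β p < β q) (h2 : β q < ν p) :
    ν q < ν p := by
  by_contra hlt
  rcases Nat.lt_or_ge (ν p) (ν q) with h | h
  · have := H.arcMin p _ (H.nc _ _ _ _ h1 h2 h (H.arcR p) (H.arcR q)) h1
    omega
  · have he : ν q = ν p := by omega
    have h3 : R (β p) (β q) :=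
      H.trans _ _ _ (H.arcR p) (H.symm _ _ (he ▸ H.arcR q))
    have := H.arcMin p _ h3 h1
    omega

theorem step1 (x y : ℕ) (h : ∀ p, β p = x → ¬ ν p ≤ y) :
    arcCount β ν x y = arcCount β ν (x + 1) y := by
  unfold arcCount
  congr 1
  ext p
  simp only [Finset.mem_filter, Finset.mem_univ, true_and]
  constructor
  · rintro ⟨h1, h2⟩
    refine ⟨?_, h2⟩
    by_contra h3
    exact h p (by omega) h2
  · rintro ⟨h1, h2⟩
    exact ⟨by omega, h2⟩

theorem step2 (H : ArcCtx n k R β ν) (p : Fin k) (y : ℕ) (h : ν p ≤ y) :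
    arcCount β ν (β p) y = arcCount β ν (β p) (ν p) + arcCount β ν (ν p) y := by
  unfold arcCount
  rw [← Finset.card_union_of_disjoint]
  · congr 1
    ext q
    simp only [Finset.mem_filter, Finset.mem_univ, true_and, Finset.mem_union]
    constructor
    · rintro ⟨h1, h2⟩
      rcases Nat.lt_or_ge (β q) (ν p) with h3 | h3
      · left
        refine ⟨h1, ?_⟩
        rcases Nat.eq_or_lt_of_le h1 with h4 | h4
        · rw [H.mono.injective h4]
        · exact (H.nest h4 h3).le
      · right
        exact ⟨h3, h2⟩
    · have := H.arcLt p
      rintro (⟨h1, h2⟩ | ⟨h1, h2⟩)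
      · exact ⟨h1, by omega⟩
      · exact ⟨by omega, h2⟩
  · rw [Finset.disjoint_left]
    intro q
    simp only [Finset.mem_filter, Finset.mem_univ, true_and]
    have := H.arcLt q
    omega

theorem step3 (H : ArcCtx n k R β ν) (p : Fin k) :
    arcCount β ν (β p) (ν p) = arcCount β ν (β p + 1) (ν p - 1) + 1 := by
  unfold arcCount
  rw [← Finset.card_insert_of_notMem (a := p)]
  · congr 1
    ext q
    simp only [Finset.mem_filter, Finset.mem_univ, true_and, Finset.mem_insert]
    have hp := H.arcLt p
    have hq := H.arcLt q
    constructor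
    · rintro ⟨h1, h2⟩
      rcases Nat.eq_or_lt_of_le h1 with h4 | h4
      · left
        exact (H.mono.injective h4).symm
      · right
        have := H.nest h4 (by omega)
        omega
    · rintro (rfl | h)
      · simp
      · omega
  · simp

theorem bound (H : ArcCtx n k R β ν) (m : ℕ) :
    ∀ x y, x ≤ y → y - x ≤ m → 2 * arcCount β ν x y + x ≤ y := by
  induction m with
  | zero =>
    intro x y h1 h2
    have hxy : x = y := by omega
    subst hxy
    have : arcCount β ν x x = 0 := by
      unfold arcCount
      rw [Finset.card_eq_zero, Finset.filter_eq_empty_iff]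
      intro p _
      have := H.arcLt p
      omega
    omega
  | succ m ih =>
    intro x y h1 h2
    by_cases h : ∃ p, β p = x ∧ ν p ≤ y
    · obtain ⟨p, rfl, hp⟩ := h
      have h2p := H.arcTwo p
      have e2 := H.step2 p y hp
      have e3 := H.step3 p
      have i1 := ih (β p + 1) (ν p - 1) (by omega) (by omega)
      have i2 := ih (ν p) y (by omega) (by omega)
      omega
    · push Not at h
      rcases Nat.eq_or_lt_of_le h1 with h3 | h3
      · exact ih x y h1 (by omega)
      · have e1 := step1 (β := β) (ν := ν) x y (fun p hp => not_le.2 (h p hp))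
        have i1 := ih (x + 1) y (by omega) (by omega)
        omega

theorem bound' (H : ArcCtx n k R β ν) (p : Fin k) (m : ℕ) :
    ∀ x y, x ≤ β p → ν p ≤ y → y - x ≤ m →
      2 * arcCount β ν x y + ν p + x ≤ y + β p + 2 * arcCount β ν (β p) (ν p) := by
  have hp := H.arcTwo p
  induction m with
  | zero => intro x y h1 h2 h3; omega
  | succ m ih =>
    intro x y h1 h2 h3
    by_cases h : ∃ q, β q = x ∧ ν q ≤ y
    · obtain ⟨q, rfl, hq⟩ := h
      have h2q := H.arcTwo q
      have e2 := H.step2 q y hq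
      have e3 := H.step3 q
      have b1 := H.bound _ (ν q) y hq le_rfl
      rcases Nat.eq_or_lt_of_le h1 with h4 | h4
      · have := H.mono.injective h4
        subst this
        omega
      · rcases Nat.lt_or_ge (β p) (ν q) with h5 | h5
        · have := H.nest h4 h5
          have := ih (β q + 1) (ν q - 1) (by omega) (by omega) (by omega)
          omega
        · have := ih (ν q) y (by omega) (by omega) (by omega)
          have := H.bound _ (β q) (ν q) (by omega) le_rfl
          omega
    · push Not at h
      have e1 := step1 (β := β) (ν := ν) x y (fun p hp => not_le.2 (h p hp))
      have h4 : x ≠ β p := by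
        rintro rfl
        have := h p rfl
        omega
      have := ih (x + 1) y (by omega) (by omega) (by omega)
      omega

theorem tight (H : ArcCtx n k R β ν) (p : Fin k) :
    2 * arcCount β ν (β p) (ν p) + β p = ν p := by
  have hp := H.arcTwo p
  have h1 := H.bound _ (β p) (ν p) (by omega) le_rfl
  have r1 := H.rng _ _ (H.arcR p)
  have r2 := H.rng' (H.arcR p)
  have h2 := H.bound' p _ 1 (2 * n) r1.1 r2.2 le_rfl
  have h3 : arcCount β ν 1 (2 * n) = k := by
    unfold arcCount
    rw [Finset.filter_true_of_mem]
    · simp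
    · intro q _
      exact ⟨(H.rng _ _ (H.arcR q)).1, (H.rng' (H.arcR q)).2⟩
  have := H.hk
  have := H.par _ _ (H.arcR p)
  omega

theorem tightR (H : ArcCtx n k R β ν) (m : ℕ) :
    ∀ x y, R x y → x ≤ y → y - x ≤ m → 2 * arcCount β ν x y + x = y := by
  induction m with
  | zero =>
    intro x y _ h1 h2
    have := H.bound _ x y h1 le_rfl
    omega
  | succ m ih =>
    intro x y h h1 h2
    rcases Nat.eq_or_lt_of_le h1 with h3 | h3
    · have := H.bound _ x y h1 le_rfl
      omega
    · obtain ⟨p, rfl⟩ := H.start x y h h3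
      have h4 := H.arcMin p y h h3
      have := H.step2 p y h4
      have := H.tight p
      have := H.arcLt p
      have := ih (ν p) y (H.trans _ _ _ (H.symm _ _ (H.arcR p)) h) h4 (by omega)
      omega

theorem relOfTight (H : ArcCtx n k R β ν) (m : ℕ) :
    ∀ x y, 1 ≤ x → y ≤ 2 * n → x ≤ y → 2 * arcCount β ν x y + x = y → y - x ≤ m → R x y := by
  induction m with
  | zero =>
    intro x y h1 h2 h3 h4 h5
    have : x = y := by omega
    subst this
    exact H.refl _ h1 h2
  | succ m ih =>
    intro x y h1 h2 h3 h4 h5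
    rcases Nat.eq_or_lt_of_le h3 with h6 | h6
    · subst h6
      exact H.refl _ h1 h2
    by_cases h : ∃ p, β p = x ∧ ν p ≤ y
    · obtain ⟨p, rfl, hp⟩ := h
      have h2p := H.arcTwo p
      have e2 := H.step2 p y hp
      have := H.tight p
      exact H.trans _ _ _ (H.arcR p) (ih (ν p) y (by omega) h2 hp (by omega) (by omega))
    · push Not at h
      have e1 := step1 (β := β) (ν := ν) x y (fun p hp => not_le.2 (h p hp))
      have := H.bound _ (x + 1) y h6 le_rfl
      omega

/-- The two extreme points strictly below an arc lie in one block. -/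
theorem under (H : ArcCtx n k R β ν) (p : Fin k) : R (β p + 1) (ν p - 1) := by
  have h2p := H.arcTwo p
  have := H.tight p
  have := H.step3 p
  have r2 := H.rng' (H.arcR p)
  exact H.relOfTight _ _ _ (by omega) (by omega) (by omega) (by omega) le_rfl

theorem underMem (H : ArcCtx n k R β ν) (p : Fin k) {y : ℕ} (h : R (β p + 1) y) :
    β p < y ∧ y < ν p := by
  have h2p := H.arcTwo p
  have par1 := H.par _ _ h
  have par2 := H.par _ _ (H.arcR p)
  constructor
  · by_contra hlt
    have h1 := H.par _ _ (H.nc y (β p) (β p + 1) (ν p) (by omega) (by omega) (by omega)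
      (H.symm _ _ h) (H.arcR p))
    omega
  · by_contra hlt
    have h1 := H.par _ _ (H.nc (β p) (β p + 1) (ν p) y (by omega) (by omega) (by omega)
      (H.arcR p) h)
    omega

theorem underNest (H : ArcCtx n k R β ν) (p q : Fin k) {j : ℕ} (h : R (β p + 1) (j + 1))
    (h1 : β p < β q) (h2 : β q ≤ j) : ν q ≤ j + 1 := by
  by_contra hlt
  have h3 : R (β q) (j + 1) := by
    rcases Nat.eq_or_lt_of_le h1 with h4 | h4
    · rw [← h4]; exact h
    · exact H.trans _ _ _ (H.symm _ _ (H.nc (β p + 1) (β q) (j + 1) (ν q) h4 (by omega) (by omega)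
        h (H.arcR q))) h
  have := H.arcMin q _ h3 (by omega)
  omega

theorem underCount (H : ArcCtx n k R β ν) (p : Fin k) {j : ℕ} (h : R (β p + 1) (j + 1)) :
    2 * (Finset.univ.filter fun q => β p < β q ∧ β q < j).card + β p = j := by
  have e := H.underMem p h
  have := H.tightR _ _ _ h (by omega) le_rfl
  have h2 : (Finset.univ.filter fun q => β p < β q ∧ β q < j).card =
      arcCount β ν (β p + 1) (j + 1) := by
    unfold arcCount
    congr 1
    ext q
    simp only [Finset.mem_filter, Finset.mem_univ, true_and]
    constructor
    · rintro ⟨h3, h4⟩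
      exact ⟨h3, H.underNest p q h h3 (by omega)⟩
    · rintro ⟨h3, h4⟩
      have := H.arcTwo q
      omega
  omega

theorem arcInner (H : ArcCtx n k R β ν) (p : Fin k) :
    2 * (Finset.univ.filter fun q => β p < β q ∧ β q < ν p).card + β p + 2 = ν p := by
  have h2p := H.arcTwo p
  have := H.tight p
  have := H.step3 p
  have h2 : (Finset.univ.filter fun q => β p < β q ∧ β q < ν p).card =
      arcCount β ν (β p + 1) (ν p - 1) := by
    unfold arcCount
    congr 1
    ext q
    simp only [Finset.mem_filter, Finset.mem_univ, true_and]
    have := H.arcTwo q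
    constructor
    · rintro ⟨h3, h4⟩
      have := H.nest h3 h4
      omega
    · omega
  omega

end ArcCtx

/-- Reordering a wedge along a "non-crossing" choice function. -/
theorem wedge_sort {k : ℕ} {M N : Type*} [AddCommGroup M] [Module ℝ M] [AddCommGroup N]
    [Module ℝ N] (g : M [⋀^Fin k]→ₗ[ℝ] N) (u : ℕ → M) (β f : Fin k → ℕ) (hβ : StrictMono β)
    (hf : Function.Injective f) (hle : ∀ p, β p ≤ f p)
    (hc : ∀ p q, β p < β q → β q < f p → f q < f p) :
    g (fun p => u (f p)) =
      (∏ p, (-1 : ℝ) ^ (Finset.univ.filter fun q => β p < β q ∧ β q < f p).card) •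
        g (fun p => u (((Finset.univ.image f).sort (· ≤ ·)).getD p.val 0)) := by
  have hcard : (Finset.univ.image f).card = k := by
    rw [Finset.card_image_of_injective _ hf]; simp
  set o := (Finset.univ.image f).orderEmbOfFin hcard with ho
  have hex : ∀ p, ∃ q, o q = f p := by
    intro p
    have : f p ∈ Set.range o := by
      rw [ho, Finset.range_orderEmbOfFin]; simp
    exact this
  choose π hπ using hex
  have hinj : Function.Injective π := by
    intro a b hab
    apply hf
    rw [← hπ a, ← hπ b, hab]
  let P : Equiv.Perm (Fin k) := Equiv.ofBijective π (Finite.injective_iff_bijective.1 hinj)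
  have hget : ∀ p : Fin k, ((Finset.univ.image f).sort (· ≤ ·)).getD p.val 0 = o p := by
    intro p
    rw [ho, Finset.orderEmbOfFin_apply]
    rw [List.getD_eq_getElem]
    rfl
  have h1 : (fun p => u (f p)) = (fun p => u (o p)) ∘ P := by
    funext p
    simp [P, hπ]
  rw [h1, g.map_perm]
  simp only [hget]
  rw [Equiv.Perm.sign_eq_prod_prod_Ioi, Units.smul_def, ← Int.cast_smul_eq_zsmul ℝ]
  congr 1
  push_cast
  refine Finset.prod_congr rfl fun p _ => ?_
  rw [← Finset.prod_const, Finset.prod_filter]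
  rw [← Finset.prod_subset (Finset.subset_univ (Finset.Ioi p))]
  · refine Finset.prod_congr rfl fun q hq => ?_
    have hpq : β p < β q := hβ (Finset.mem_Ioi.1 hq)
    have hlt : P p < P q ↔ f p < f q := by
      rw [← hπ p, ← hπ q, o.lt_iff_lt]; rfl
    by_cases h : β q < f p
    · have := hc p q hpq h
      rw [if_neg (by rw [hlt]; omega), if_pos ⟨hpq, h⟩]
      simp
    · have h2 := hle q
      have h3 : f p ≠ f q := fun e => by
        have := hf e
        subst this
        omega
      rw [if_pos (by rw [hlt]; omega), if_neg (by tauto)]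
      simp
  · intro q _ hq
    rw [if_neg]
    rintro ⟨h, _⟩
    exact hq (Finset.mem_Ioi.2 (hβ.lt_iff_lt.1 h))

/-- Unitriangular row operations do not change a wedge. -/
theorem wedge_triangular {k : ℕ} {M N : Type*} [AddCommGroup M] [Module ℝ M] [AddCommGroup N]
    [Module ℝ N] (g : M [⋀^Fin k]→ₗ[ℝ] N) (r r' : Fin k → M)
    (h : ∀ p, r' p - r p ∈ Submodule.span ℝ (r '' Set.Ioi p)) : g r' = g r := by
  have h1 : ∀ p, ∃ c : Fin k → ℝ, c p = 1 ∧ r' p = ∑ q ∈ Finset.Ici p, c q • r q := by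
    intro p
    have h2 := h p
    rw [← Finset.coe_Ioi, Submodule.mem_span_image_finset_iff_exists_fun'] at h2
    obtain ⟨c, hc⟩ := h2
    refine ⟨Function.update c p 1, by simp, ?_⟩
    rw [← Finset.Ioi_insert, Finset.sum_insert (by simp), Function.update_self, one_smul,
      ← sub_eq_iff_eq_add', ← hc]
    refine Finset.sum_congr rfl fun q hq => ?_
    rw [Function.update_of_ne (Finset.mem_Ioi.1 hq).ne']
  choose c hc1 hc2 using h1
  have e : r' = fun p => ∑ q ∈ Finset.Ici p, c p q • r q := funext hc2
  rw [e]
  have := g.toMultilinearMap.map_sum_finset (fun p q => c p q • r q) (fun p => Finset.Ici p)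
  simp only [AlternatingMap.coe_multilinearMap] at this
  rw [this, Finset.sum_eq_single id]
  · simp [hc1]
  · intro s hs hne
    rw [← AlternatingMap.coe_multilinearMap, MultilinearMap.map_smul_univ]
    rw [AlternatingMap.coe_multilinearMap, g.map_eq_zero_of_not_injective, smul_zero]
    intro hinj
    have hsinj : Function.Injective s := fun a b hab => hinj (by simp [hab])
    apply hne
    funext p
    simp only [Fintype.mem_piFinset, Finset.mem_Ici] at hs
    have key : ∀ m : ℕ, ∀ q : Fin k, k - q.val ≤ m → s q = q := by
      intro m
      induction m with
      | zero => intro q hq; have := q.2; omega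
      | succ m ih =>
        intro q hq
        by_contra hne
        have hlt : q < s q := lt_of_le_of_ne (hs q) (Ne.symm hne)
        have := ih (s q) (by have := (s q).2; have : q.val < (s q).val := hlt; omega)
        exact hne (hsinj this)
    exact key _ p le_rfl
  · intro hs
    simp at hs

noncomputable section

/-- Sign-twisted vectors. -/
def twist {M : Type*} [AddCommGroup M] [Module ℝ M] (u : ℕ → M) (j : ℕ) : M :=
  (-1 : ℝ) ^ (j / 2) • u j

/-- The row attached to an arc. -/
def arcRow {M : Type*} [AddCommGroup M] [Module ℝ M] {k : ℕ} (u : ℕ → M) (β ν : Fin k → ℕ)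
    (p : Fin k) : M :=
  (-1 : ℝ) ^ (β p / 2) • (twist u (β p) - twist u (ν p))

/-- The reduced support of an arc. -/
def arcSupp {k : ℕ} (n : ℕ) (R : ℕ → ℕ → Prop) (β : Fin k → ℕ) (p : Fin k) : Finset ℕ :=
  (Finset.range (2 * n)).filter fun j => R (β p + 1) (j + 1)

/-- The reduced row attached to an arc. -/
def arcRow' {M : Type*} [AddCommGroup M] [Module ℝ M] {k : ℕ} (n : ℕ) (R : ℕ → ℕ → Prop)
    (u : ℕ → M) (β : Fin k → ℕ) (p : Fin k) : M :=
  (-1 : ℝ) ^ (β p / 2) • ∑ j ∈ arcSupp n R β p, (twist u j - twist u (j + 2))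

end

/-- Concordance of `I` in terms of the "same block" relation. -/
def relConc (n : ℕ) (R : ℕ → ℕ → Prop) (I : Finset ℕ) : Prop :=
  ∀ x, 1 ≤ x → x ≤ 2 * n → ∃! c, R x c ∧ c ∉ I

theorem neg_one_pow_mul_self (m : ℕ) : (-1 : ℝ) ^ m * (-1 : ℝ) ^ m = 1 := by
  rw [← pow_add]; exact Even.neg_one_pow ⟨m, rfl⟩

namespace ArcCtx

variable {n k : ℕ} {R : ℕ → ℕ → Prop} {β ν : Fin k → ℕ}
variable {M N : Type*} [AddCommGroup M] [Module ℝ M] [AddCommGroup N] [Module ℝ N]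

theorem mem_supp (H : ArcCtx n k R β ν) (p : Fin k) (j : ℕ) :
    j ∈ arcSupp n R β p ↔ R (β p + 1) (j + 1) := by
  unfold arcSupp
  rw [Finset.mem_filter, Finset.mem_range]
  constructor
  · exact fun h => h.2
  · intro h
    have := H.rng' h
    exact ⟨by omega, h⟩

theorem chain_mem (H : ArcCtx n k R β ν) (u : ℕ → M) (p : Fin k) (m : ℕ) :
    ∀ x y, R x y → x ≤ y → β p < x → y - x ≤ m →
      twist u x - twist u y ∈ Submodule.span ℝ (arcRow u β ν '' Set.Ioi p) := by
  induction m with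
  | zero =>
    intro x y _ h1 _ h2
    have : x = y := by omega
    subst this
    simp
  | succ m ih =>
    intro x y h h1 h2 h3
    rcases Nat.eq_or_lt_of_le h1 with h4 | h4
    · subst h4
      simp
    · obtain ⟨q, rfl⟩ := H.start x y h h4
      have h5 := H.arcMin q y h h4
      have h6 := H.arcLt q
      have h7 := ih (ν q) y (H.trans _ _ _ (H.symm _ _ (H.arcR q)) h) h5 (by omega) (by omega)
      have h8 : twist u (β q) - twist u (ν q) = (-1 : ℝ) ^ (β q / 2) • arcRow u β ν q := by
        unfold arcRow
        rw [smul_smul, neg_one_pow_mul_self, one_smul]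
      have h9 : twist u (β q) - twist u y =
          (twist u (β q) - twist u (ν q)) + (twist u (ν q) - twist u y) := by abel
      rw [h9]
      refine Submodule.add_mem _ ?_ h7
      rw [h8]
      exact Submodule.smul_mem _ _ (Submodule.subset_span ⟨q, H.mono.lt_iff_lt.1 h2, rfl⟩)

theorem partial_mem (H : ArcCtx n k R β ν) (u : ℕ → M) (p : Fin k) (j : ℕ) :
    R (β p + 1) (j + 1) →
    (∑ i ∈ (arcSupp n R β p).filter (· < j), (twist u i - twist u (i + 2))) -
      (twist u (β p) - twist u j) ∈ Submodule.span ℝ (arcRow u β ν '' Set.Ioi p) := by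
  induction j using Nat.strong_induction_on with
  | _ j ih =>
    intro h
    have hm := H.underMem p h
    rcases Nat.eq_or_lt_of_le (show β p ≤ j by omega) with h1 | h1
    · have h0 : (arcSupp n R β p).filter (· < j) = ∅ := by
        rw [Finset.filter_eq_empty_iff]
        intro t ht
        rw [H.mem_supp] at ht
        have := H.underMem p ht
        omega
      rw [h0, h1]
      simp
    · obtain ⟨q, hq, hq1, hq2⟩ := H.pred h (by omega)
      have h2q := H.arcTwo q
      obtain ⟨i, hi⟩ : ∃ i, β q = i + 1 := ⟨β q - 1, by omega⟩
      have hi' : R (β p + 1) (i + 1) := by rw [← hi]; exact hq2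
      have h3 := ih i (by omega) hi'
      have h4 : (arcSupp n R β p).filter (· < j) =
          insert i ((arcSupp n R β p).filter (· < i)) := by
        ext t
        simp only [Finset.mem_filter, Finset.mem_insert, H.mem_supp]
        constructor
        · rintro ⟨ht1, ht2⟩
          by_contra hcon
          push Not at hcon
          have ht3 := hcon.2 ht1
          have := H.arcMin q (t + 1) (H.trans _ _ _ (H.symm _ _ hq2) ht1) (by omega)
          omega
        · rintro (rfl | ⟨ht1, ht2⟩)
          · exact ⟨hi', by omega⟩
          · exact ⟨ht1, by omega⟩
      rw [h4, Finset.sum_insert (by simp)]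
      have h5 := H.under q
      rw [hq, hi] at h5
      have h6 := H.chain_mem u p _ (i + 1 + 1) (j + 1 - 1) h5 (by omega) (by omega) le_rfl
      have h7 := Submodule.sub_mem _ h3 h6
      convert h7 using 1
      simp only [Nat.add_sub_cancel]
      abel

theorem row_sub_mem (H : ArcCtx n k R β ν) (u : ℕ → M) (p : Fin k) :
    arcRow' n R u β p - arcRow u β ν p ∈ Submodule.span ℝ (arcRow u β ν '' Set.Ioi p) := by
  unfold arcRow'
  conv in arcRow u β ν p => unfold arcRow
  rw [← smul_sub]
  refine Submodule.smul_mem _ _ ?_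
  have h2 := H.arcTwo p
  obtain ⟨j, hj⟩ : ∃ j, ν p = j + 2 := ⟨ν p - 2, by omega⟩
  have h3 := H.under p
  rw [hj] at h3
  have h4 := H.partial_mem u p j h3
  have h5 : arcSupp n R β p = insert j ((arcSupp n R β p).filter (· < j)) := by
    ext t
    simp only [Finset.mem_filter, Finset.mem_insert, H.mem_supp]
    constructor
    · intro ht
      have := H.underMem p ht
      by_cases htj : t = j
      · exact Or.inl htj
      · exact Or.inr ⟨ht, by omega⟩
    · rintro (rfl | ⟨ht1, ht2⟩)
      · exact h3
      · exact ht1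
  rw [h5, Finset.sum_insert (by simp)]
  convert h4 using 1
  rw [hj]
  abel

theorem wedge_rows (H : ArcCtx n k R β ν) (u : ℕ → M) (g : M [⋀^Fin k]→ₗ[ℝ] N) :
    g (arcRow' n R u β) = g (arcRow u β ν) :=
  wedge_triangular g _ _ (H.row_sub_mem u)

theorem expand_rows' (H : ArcCtx n k R β ν) (u : ℕ → M) (g : M [⋀^Fin k]→ₗ[ℝ] N) :
    g (arcRow' n R u β) = ∑ f ∈ Fintype.piFinset (arcSupp n R β),
      g (fun p => (fun j => u j + u (j + 2))
        (((Finset.univ.image f).sort (· ≤ ·)).getD p.val 0)) := by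
  have h1 : arcRow' n R u β = fun p => ∑ j ∈ arcSupp n R β p,
      (-1 : ℝ) ^ (β p / 2 + j / 2) • (u j + u (j + 2)) := by
    funext p
    unfold arcRow'
    rw [Finset.smul_sum]
    refine Finset.sum_congr rfl fun j _ => ?_
    unfold twist
    rw [show (j + 2) / 2 = j / 2 + 1 by omega, pow_succ, mul_neg_one, neg_smul, sub_neg_eq_add,
      ← smul_add, smul_smul, ← pow_add]
  rw [h1, ← AlternatingMap.coe_multilinearMap, MultilinearMap.map_sum_finset]
  refine Finset.sum_congr rfl fun f hf => ?_
  have hR : ∀ p, R (β p + 1) (f p + 1) := fun p =>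
    (H.mem_supp p _).1 (Fintype.mem_piFinset.1 hf p)
  rw [MultilinearMap.map_smul_univ, AlternatingMap.coe_multilinearMap]
  have hc : ∀ p q, β p < β q → β q ≤ f p → f q < f p := by
    intro p q h1 h2
    have := H.underNest p q (hR p) h1 h2
    have := H.underMem q (hR q)
    omega
  have hle : ∀ p, β p ≤ f p := fun p => by
    have := H.underMem p (hR p)
    omega
  have hinj : Function.Injective f := by
    intro p q hpq
    by_contra hne
    rcases lt_or_gt_of_ne hne with h | h
    · have := hc p q (H.mono h) (by rw [hpq]; exact hle q)
      omega
    · have := hc q p (H.mono h) (by rw [← hpq]; exact hle p)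
      omega
  rw [wedge_sort g (fun j => u j + u (j + 2)) β f H.mono hinj hle
    (fun p q h1 h2 => hc p q h1 h2.le), smul_smul, ← Finset.prod_mul_distrib,
    Finset.prod_eq_one, one_smul]
  intro p _
  have h2 := H.underCount p (hR p)
  rw [← pow_add]
  refine Even.neg_one_pow ⟨f p / 2, ?_⟩
  omega

theorem supp_disj (H : ArcCtx n k R β ν) {p q : Fin k} {j : ℕ} (hp : j ∈ arcSupp n R β p)
    (hq : j ∈ arcSupp n R β q) : p = q := by
  rw [H.mem_supp] at hp hq
  have h1 := H.underMem p hp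
  have h2 := H.underMem q hq
  by_contra hne
  rcases lt_or_gt_of_ne hne with h | h
  · have := H.underNest p q hp (H.mono h) (by omega)
    omega
  · have := H.underNest q p hq (H.mono h) (by omega)
    omega

theorem coeffs (H : ArcCtx n k R β ν) (G : Finset ℕ → N) :
    ∃ c : Finset ℕ → ℝ, (∀ J, c J = 0 ∨ c J = 1) ∧
      ∑ f ∈ Fintype.piFinset (arcSupp n R β), G (Finset.univ.image f) =
        ∑ J ∈ (Finset.Icc 1 (2 * n - 2)).powersetCard k, c J • G J := by
  set T := (Fintype.piFinset (arcSupp n R β)).image (fun f => Finset.univ.image f) with hT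
  refine ⟨fun J => if J ∈ T then 1 else 0, fun J => by by_cases h : J ∈ T <;> simp [h], ?_⟩
  have hinj : ∀ f ∈ Fintype.piFinset (arcSupp n R β),
      ∀ f' ∈ Fintype.piFinset (arcSupp n R β),
      (∀ p, ∃ q, f' q = f p) → f = f' := by
    intro f hf f' hf' h
    funext p
    obtain ⟨q, hq⟩ := h p
    rw [Fintype.mem_piFinset] at hf hf'
    have := H.supp_disj (hf p) (hq ▸ hf' q)
    subst this
    exact hq.symm
  have h1 : ∑ f ∈ Fintype.piFinset (arcSupp n R β), G (Finset.univ.image f) = ∑ J ∈ T, G J := by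
    rw [hT, Finset.sum_image]
    intro f hf f' hf' h
    refine hinj f hf f' hf' fun p => ?_
    have h2 : f p ∈ Finset.univ.image f' := by
      have h3 : Finset.univ.image f = Finset.univ.image f' := h
      rw [← h3]; simp
    simpa using h2
  rw [h1]
  simp only [ite_smul, one_smul, zero_smul]
  rw [← Finset.sum_filter]
  refine Finset.sum_congr ?_ fun _ _ => rfl
  ext J
  rw [Finset.mem_filter, iff_and_self]
  intro hJ
  rw [hT, Finset.mem_image] at hJ
  obtain ⟨f, hf, rfl⟩ := hJ
  rw [Fintype.mem_piFinset] at hf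
  rw [Finset.mem_powersetCard]
  constructor
  · intro j hj
    rw [Finset.mem_image] at hj
    obtain ⟨p, _, rfl⟩ := hj
    have h2 := H.underMem p ((H.mem_supp _ _).1 (hf p))
    have h3 := H.rng' (H.arcR p)
    have h4 := H.rng _ _ (H.arcR p)
    have h5 := H.par _ _ (H.arcR p)
    have h6 := H.par _ _ ((H.mem_supp _ _).1 (hf p))
    rw [Finset.mem_Icc]
    omega
  · rw [Finset.card_image_of_injective]
    · simp
    · intro p q hpq
      exact H.supp_disj (hf p) (hpq ▸ hf q)

theorem expand_rows (H : ArcCtx n k R β ν) (u : ℕ → M) (g : M [⋀^Fin k]→ₗ[ℝ] N) :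
    g (arcRow u β ν) =
      ∑ f ∈ (Fintype.piFinset (fun p => ({β p, ν p} : Finset ℕ))).filter Function.Injective,
      g (fun p => u (((Finset.univ.image f).sort (· ≤ ·)).getD p.val 0)) := by
  have h1 : arcRow u β ν = fun p => ∑ j ∈ ({β p, ν p} : Finset ℕ),
      (-1 : ℝ) ^ (β p / 2 + j / 2 + if j = β p then 0 else 1) • u j := by
    funext p
    have := H.arcLt p
    rw [Finset.sum_pair (by omega), if_pos rfl, if_neg (by omega)]
    unfold arcRow twist
    rw [smul_sub, smul_smul, smul_smul, ← pow_add, ← pow_add, add_zero, pow_succ, mul_neg_one,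
      neg_smul, sub_eq_add_neg]
  rw [h1, ← AlternatingMap.coe_multilinearMap, MultilinearMap.map_sum_finset, Finset.sum_filter]
  refine Finset.sum_congr rfl fun f hf => ?_
  rw [MultilinearMap.map_smul_univ, AlternatingMap.coe_multilinearMap]
  split_ifs with hinj
  · have hR : ∀ p, f p = β p ∨ f p = ν p := by
      intro p
      simpa using Fintype.mem_piFinset.1 hf p
    have hle : ∀ p, β p ≤ f p := fun p => by
      have := H.arcLt p
      have := hR p
      omega
    rw [wedge_sort g u β f H.mono hinj hle ?_, smul_smul, ← Finset.prod_mul_distrib,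
      Finset.prod_eq_one, one_smul]
    · intro p _
      rw [← pow_add]
      apply Even.neg_one_pow
      rcases hR p with h | h
      · have : (Finset.univ.filter fun q => β p < β q ∧ β q < f p).card = 0 := by
          rw [Finset.card_eq_zero, Finset.filter_eq_empty_iff]
          intro q _
          omega
        rw [this, if_pos h, h]
        exact ⟨β p / 2, by omega⟩
      · have h2 := H.arcInner p
        have := H.arcLt p
        rw [h, if_neg (by omega)]
        exact ⟨ν p / 2, by omega⟩
    · intro p q h2 h3
      have h4 := hR p
      have h5 := hR q
      have h6 := H.arcLt q
      have h7 := H.nest h2 (by have := H.arcLt p; omega : β q < ν p)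
      omega
  · have : ¬ Function.Injective (fun p => u (f p)) := by
      intro hi
      exact hinj fun a b hab => hi (by simp [hab])
    rw [g.map_eq_zero_of_not_injective _ this, smul_zero]

/-- For an injective choice, the second end of an arc is chosen exactly when some smaller
element of the block is missed. -/
theorem choice_iff (H : ArcCtx n k R β ν) (f : Fin k → ℕ) (hinj : Function.Injective f)
    (hf : ∀ p, f p = β p ∨ f p = ν p) (m : ℕ) : ∀ p, β p ≤ m →
    (f p = ν p ↔ ∃ c, c ≤ β p ∧ R c (β p) ∧ ∀ q, f q ≠ c) := by
  induction m with
  | zero =>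
    intro p hp
    have := H.rng _ _ (H.arcR p)
    omega
  | succ m ih =>
    intro p hp
    have hlt := H.arcLt p
    constructor
    · intro h
      by_cases hm : ∀ q, f q ≠ β p
      · exact ⟨β p, le_rfl, H.refl _ (H.rng _ _ (H.arcR p)).1 (H.rng _ _ (H.arcR p)).2, hm⟩
      · push Not at hm
        obtain ⟨q, hq⟩ := hm
        have hqp : q ≠ p := by rintro rfl; omega
        have hq2 : f q = ν q := by
          rcases hf q with h1 | h1
          · exact absurd (H.mono.injective (h1.symm.trans hq)) hqp
          · exact h1
        have hltq := H.arcLt q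
        obtain ⟨c, hc1, hc2, hc3⟩ := (ih q (by omega)).1 hq2
        have e : ν q = β p := by omega
        exact ⟨c, by omega, H.trans _ _ _ hc2 (e ▸ H.arcR q), hc3⟩
    · rintro ⟨c, hc1, hc2, hc3⟩
      rcases Nat.eq_or_lt_of_le hc1 with h1 | h1
      · have := hc3 p
        have := hf p
        omega
      · obtain ⟨q, hq1, hq2, hq3⟩ := H.pred hc2 h1
        have hltq := H.arcLt q
        have h2 := (ih q (by omega)).2 ⟨c, hq2, hq3, hc3⟩
        rcases hf p with h3 | h3
        · have : q = p := hinj (by omega)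
          subst this
          omega
        · exact h3

/-- Injective choices of arc ends correspond to concordant subsets. -/
theorem sum_choice (H : ArcCtx n k R β ν) (G : Finset ℕ → N) :
    ∑ f ∈ (Fintype.piFinset (fun p => ({β p, ν p} : Finset ℕ))).filter Function.Injective,
        G (Finset.univ.image f) =
      ∑ I ∈ ((Finset.Icc 1 (2 * n)).powersetCard k).filter
        (relConc n R), G I := by
  have hnot : ∀ (f : Fin k → ℕ) c, c ∉ Finset.univ.image f ↔ ∀ q, f q ≠ c := by
    intro f c; simp
  have hFinj : ∀ I : Finset ℕ, Function.Injective
      (fun p : Fin k => if ∃ c, c ≤ β p ∧ R c (β p) ∧ c ∉ I then ν p else β p) := by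
    intro I
    have aux : ∀ p q : Fin k, p < q →
        (if ∃ c, c ≤ β p ∧ R c (β p) ∧ c ∉ I then ν p else β p) ≠
        (if ∃ c, c ≤ β q ∧ R c (β q) ∧ c ∉ I then ν q else β q) := by
      intro p q hpq h
      have h1 := H.mono hpq
      have hp := H.arcLt p
      have hq := H.arcLt q
      by_cases hcp : ∃ c, c ≤ β p ∧ R c (β p) ∧ c ∉ I
      · rw [if_pos hcp] at h
        by_cases hcq : ∃ c, c ≤ β q ∧ R c (β q) ∧ c ∉ I
        · rw [if_pos hcq] at h
          have := H.nest h1 (by omega)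
          omega
        · rw [if_neg hcq] at h
          obtain ⟨c, hc1, hc2, hc3⟩ := hcp
          exact hcq ⟨c, by omega, H.trans _ _ _ hc2 (h ▸ H.arcR p), hc3⟩
      · rw [if_neg hcp] at h
        split_ifs at h <;> omega
    intro p q h
    by_contra hne
    rcases lt_or_gt_of_ne hne with h1 | h1
    · exact aux p q h1 h
    · exact aux q p h1 h.symm
  refine Finset.sum_bij' (fun f _ => Finset.univ.image f)
    (fun I _ p => if ∃ c, c ≤ β p ∧ R c (β p) ∧ c ∉ I then ν p else β p) ?_ ?_ ?_ ?_ ?_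
  · intro f hf
    simp only [Finset.mem_filter, Fintype.mem_piFinset, Finset.mem_insert,
      Finset.mem_singleton] at hf
    obtain ⟨hf, hinj⟩ := hf
    have key := fun p => H.choice_iff f hinj hf _ p le_rfl
    simp only [Finset.mem_filter, Finset.mem_powersetCard, relConc]
    refine ⟨⟨?_, ?_⟩, ?_⟩
    · intro j hj
      rw [Finset.mem_image] at hj
      obtain ⟨p, _, rfl⟩ := hj
      have h3 := H.rng' (H.arcR p)
      have h4 := H.rng _ _ (H.arcR p)
      have := hf p
      rw [Finset.mem_Icc]
      omega
    · rw [Finset.card_image_of_injective _ hinj]; simp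
    · intro x hx1 hx2
      have huniq : ∀ c c', R c c' → c < c' → (∀ q, f q ≠ c) → (∀ q, f q ≠ c') → False := by
        intro c c' h1 h2 h3 h4
        obtain ⟨q, hq1, hq2, hq3⟩ := H.pred h1 h2
        exact h4 q (((key q).2 ⟨c, hq2, hq3, h3⟩).trans hq1)
      have hex : ∃ c, R x c ∧ ∀ q, f q ≠ c := by
        have hne : ((Finset.Icc 1 (2 * n)).filter fun z => R x z).Nonempty :=
          ⟨x, by simp [H.refl x hx1 hx2, hx1, hx2]⟩
        obtain ⟨z, hz, hmax⟩ := Finset.exists_max_image _ id hne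
        simp only [Finset.mem_filter, Finset.mem_Icc, id] at hz hmax
        by_cases hm : ∀ q, f q ≠ z
        · exact ⟨z, hz.2, hm⟩
        · push Not at hm
          obtain ⟨q, hq⟩ := hm
          have hltq := H.arcLt q
          rcases hf q with h1 | h1
          · exfalso
            have h2 : R x (ν q) := H.trans _ _ _ hz.2 (by rw [← hq, h1]; exact H.arcR q)
            have := hmax (ν q) ⟨H.rng' (H.arcR q), h2⟩
            omega
          · obtain ⟨c, _, hc2, hc3⟩ := (key q).1 h1
            refine ⟨c, ?_, hc3⟩
            have h2 : R (β q) z := by rw [← hq, h1]; exact H.arcR q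
            exact H.trans _ _ _ hz.2 (H.trans _ _ _ (H.symm _ _ h2) (H.symm _ _ hc2))
      obtain ⟨c, hc1, hc2⟩ := hex
      refine ⟨c, ⟨hc1, (hnot f c).2 hc2⟩, ?_⟩
      rintro c' ⟨h1, h2⟩
      rw [hnot] at h2
      by_contra hne
      have h3 : R c c' := H.trans _ _ _ (H.symm _ _ hc1) h1
      rcases lt_or_gt_of_ne hne with h | h
      · exact huniq _ _ (H.symm _ _ h3) h h2 hc2
      · exact huniq _ _ h3 h hc2 h2
  · intro I hI
    simp only [Finset.mem_filter, Fintype.mem_piFinset, Finset.mem_insert,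
      Finset.mem_singleton]
    refine ⟨fun p => by split_ifs <;> simp, ?_⟩
    exact hFinj I
  · intro f hf
    simp only [Finset.mem_filter, Fintype.mem_piFinset, Finset.mem_insert,
      Finset.mem_singleton] at hf
    obtain ⟨hf, hinj⟩ := hf
    funext p
    have key := H.choice_iff f hinj hf _ p le_rfl
    simp only [hnot]
    by_cases h : f p = ν p
    · rw [if_pos (key.1 h), h]
    · rw [if_neg (fun h2 => h (key.2 h2))]
      exact ((hf p).resolve_right h).symm
  · intro I hI
    simp only [Finset.mem_filter, Finset.mem_powersetCard, relConc] at hI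
    obtain ⟨⟨hI1, hI2⟩, hI3⟩ := hI
    apply Finset.eq_of_subset_of_card_le
    · intro j hj
      rw [Finset.mem_image] at hj
      obtain ⟨p, _, rfl⟩ := hj
      have hp := H.arcLt p
      have hr := H.rng _ _ (H.arcR p)
      by_cases hcp : ∃ c, c ≤ β p ∧ R c (β p) ∧ c ∉ I
      · rw [if_pos hcp]
        obtain ⟨c, hc1, hc2, hc3⟩ := hcp
        by_contra hcon
        have h1 := (hI3 (β p) hr.1 hr.2).unique ⟨H.symm _ _ hc2, hc3⟩ ⟨H.arcR p, hcon⟩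
        omega
      · rw [if_neg hcp]
        by_contra hcon
        exact hcp ⟨β p, le_rfl, H.refl _ hr.1 hr.2, hcon⟩
    · rw [hI2, Finset.card_image_of_injective _ (hFinj I)]
      simp
  · intro f hf
    rfl

end ArcCtx

/-- The "same block" relation of a family of blocks. -/
def sameBlock (P : Finset (Finset ℕ)) (x y : ℕ) : Prop := ∃ B ∈ P, x ∈ B ∧ y ∈ B

theorem exists_arcCtx (n : ℕ) (hn : 2 ≤ n) (P : Finset (Finset ℕ))
    (hne : ∀ B ∈ P, B.Nonempty) (hsub : ∀ B ∈ P, ∀ x ∈ B, 1 ≤ x ∧ x ≤ 2 * n)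
    (hpar : ∀ B ∈ P, ∀ x ∈ B, ∀ y ∈ B, x % 2 = y % 2)
    (hex : ∀ x, 1 ≤ x → x ≤ 2 * n → ∃ B ∈ P, x ∈ B)
    (huniq : ∀ B ∈ P, ∀ B' ∈ P, ∀ x, x ∈ B → x ∈ B' → B = B')
    (hnc : NonCrossing P) (hcard : P.card = n + 1) :
    ∃ β ν : Fin (n - 1) → ℕ, ArcCtx n (n - 1) (sameBlock P) β ν := by
  set L := (Finset.Icc 1 (2 * n)).filter (fun x => ∃ y, sameBlock P x y ∧ x < y) with hL
  have hLc : L.card = n - 1 := by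
    have h1 : ((Finset.Icc 1 (2 * n)).filter (fun x => ¬ ∃ y, sameBlock P x y ∧ x < y)).card
        = P.card := by
      symm
      refine Finset.card_bij (fun B hB => B.max' (hne B hB)) ?_ ?_ ?_
      · intro B hB
        have hm := B.max'_mem (hne B hB)
        simp only [Finset.mem_filter, Finset.mem_Icc]
        refine ⟨hsub B hB _ hm, ?_⟩
        rintro ⟨y, ⟨B', hB', h1, h2⟩, h3⟩
        have := huniq B hB B' hB' _ hm h1
        subst this
        exact absurd (B.le_max' y h2) (by omega)
      · intro B hB B' hB' h
        refine huniq B hB B' hB' _ (B.max'_mem (hne B hB)) ?_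
        have h2 := B'.max'_mem (hne B' hB')
        rwa [← h] at h2
      · intro x hx
        simp only [Finset.mem_filter, Finset.mem_Icc] at hx
        obtain ⟨B, hB, hxB⟩ := hex x hx.1.1 hx.1.2
        refine ⟨B, hB, ?_⟩
        have h1 := B.le_max' x hxB
        by_contra h2
        exact hx.2 ⟨_, ⟨B, hB, hxB, B.max'_mem (hne B hB)⟩, by omega⟩
    have h2 := Finset.card_filter_add_card_filter_not (s := Finset.Icc 1 (2 * n))
      (fun x => ∃ y, sameBlock P x y ∧ x < y)
    rw [← hL, h1, hcard] at h2
    simp at h2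
    omega
  have hβ : ∀ p, L.orderEmbOfFin hLc p ∈ L := fun p => L.orderEmbOfFin_mem hLc p
  have hν : ∀ p, ∃ y, sameBlock P (L.orderEmbOfFin hLc p) y ∧ L.orderEmbOfFin hLc p < y ∧
      ∀ z, sameBlock P (L.orderEmbOfFin hLc p) z → L.orderEmbOfFin hLc p < z → y ≤ z := by
    intro p
    have h1 := (Finset.mem_filter.1 (hβ p)).2
    exact ⟨Nat.find h1, (Nat.find_spec h1).1, (Nat.find_spec h1).2,
      fun z hz1 hz2 => Nat.find_min' h1 ⟨hz1, hz2⟩⟩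
  choose ν hν1 hν2 hν3 using hν
  refine ⟨L.orderEmbOfFin hLc, ν, ?_⟩
  refine ⟨?_, ?_, ?_, ?_, ?_, ?_, (L.orderEmbOfFin hLc).strictMono, ?_, hν1, hν2, hν3, by omega⟩
  · rintro x y ⟨B, hB, hx, hy⟩
    exact hsub B hB x hx
  · intro x h1 h2
    obtain ⟨B, hB, hx⟩ := hex x h1 h2
    exact ⟨B, hB, hx, hx⟩
  · rintro x y ⟨B, hB, hx, hy⟩
    exact ⟨B, hB, hy, hx⟩
  · rintro x y z ⟨B, hB, hx, hy⟩ ⟨B', hB', hy', hz⟩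
    have := huniq B hB B' hB' y hy hy'
    subst this
    exact ⟨B, hB, hx, hz⟩
  · rintro x y ⟨B, hB, hx, hy⟩
    exact hpar B hB x hx y hy
  · rintro a b c d h1 h2 h3 ⟨B, hB, ha, hc⟩ ⟨B', hB', hb, hd⟩
    have := hnc a b c d h1 h2 h3 B hB B' hB' ha hc hb hd
    subst this
    exact ⟨B, hB, ha, hb⟩
  · intro x y h1 h2
    obtain ⟨B, hB, hx, hy⟩ := h1
    have hxL : x ∈ L := by
      rw [hL, Finset.mem_filter, Finset.mem_Icc]
      exact ⟨hsub B hB x hx, y, ⟨B, hB, hx, hy⟩, h2⟩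
    have : x ∈ Set.range (L.orderEmbOfFin hLc) := by
      rw [Finset.range_orderEmbOfFin]; exact hxL
    exact this

theorem mem_oddSet (n x : ℕ) : x ∈ oddSet n ↔ 1 ≤ x ∧ x ≤ 2 * n ∧ x % 2 = 1 := by
  unfold oddSet
  simp only [Finset.mem_image, Finset.mem_range]
  constructor
  · rintro ⟨k, hk, rfl⟩; omega
  · rintro ⟨h1, h2, h3⟩; exact ⟨x / 2, by omega, by omega⟩

theorem mem_evenSet (n x : ℕ) : x ∈ evenSet n ↔ 1 ≤ x ∧ x ≤ 2 * n ∧ x % 2 = 0 := by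
  unfold evenSet
  simp only [Finset.mem_image, Finset.mem_range]
  constructor
  · rintro ⟨k, hk, rfl⟩; omega
  · rintro ⟨h1, h2, h3⟩; exact ⟨x / 2 - 1, by omega, by omega⟩

theorem concordance_vector_coeffs_zero_one (n : ℕ) (hn : 2 ≤ n)
    (σ σd : Finset (Finset ℕ)) (h : IsNCPair n σ σd) :
    ∃ c : Finset ℕ → ℝ, (∀ J, c J = 0 ∨ c J = 1) ∧
      concVec n σ σd =
        ∑ J ∈ (Finset.Icc 1 (2 * n - 2)).powersetCard (n - 1),
          c J • vFinsetWedge n (n - 1) J := by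
  obtain ⟨⟨a1, a2, a3⟩, -, ⟨b1, b2, b3⟩, -, hnc, hcard⟩ := h
  have oddm : ∀ B ∈ σ, ∀ x ∈ B, 1 ≤ x ∧ x ≤ 2 * n ∧ x % 2 = 1 := fun B hB x hx =>
    (mem_oddSet n x).1 (a2 B hB hx)
  have evenm : ∀ B ∈ σd, ∀ x ∈ B, 1 ≤ x ∧ x ≤ 2 * n ∧ x % 2 = 0 := fun B hB x hx =>
    (mem_evenSet n x).1 (b2 B hB hx)
  have hne : ∀ B ∈ σ ∪ σd, B.Nonempty := by
    intro B hB
    rcases Finset.mem_union.1 hB with h | h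
    · exact a1 B h
    · exact b1 B h
  have hsub : ∀ B ∈ σ ∪ σd, ∀ x ∈ B, 1 ≤ x ∧ x ≤ 2 * n := by
    intro B hB x hx
    rcases Finset.mem_union.1 hB with h | h
    · have := oddm B h x hx; omega
    · have := evenm B h x hx; omega
  have hpar : ∀ B ∈ σ ∪ σd, ∀ x ∈ B, ∀ y ∈ B, x % 2 = y % 2 := by
    intro B hB x hx y hy
    rcases Finset.mem_union.1 hB with h | h
    · have := oddm B h x hx
      have := oddm B h y hy
      omega
    · have := evenm B h x hx
      have := evenm B h y hy
      omega
  have hex : ∀ x, 1 ≤ x → x ≤ 2 * n → ∃ B ∈ σ ∪ σd, x ∈ B := by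
    intro x h1 h2
    rcases Nat.mod_two_eq_zero_or_one x with h3 | h3
    · obtain ⟨B, ⟨hB, hx⟩, -⟩ := b3 x ((mem_evenSet n x).2 ⟨h1, h2, h3⟩)
      exact ⟨B, Finset.mem_union_right _ hB, hx⟩
    · obtain ⟨B, ⟨hB, hx⟩, -⟩ := a3 x ((mem_oddSet n x).2 ⟨h1, h2, h3⟩)
      exact ⟨B, Finset.mem_union_left _ hB, hx⟩
  have huniq : ∀ B ∈ σ ∪ σd, ∀ B' ∈ σ ∪ σd, ∀ x, x ∈ B → x ∈ B' → B = B' := by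
    intro B hB B' hB' x hx hx'
    rcases Finset.mem_union.1 hB with h | h <;> rcases Finset.mem_union.1 hB' with h' | h'
    · exact (a3 x (a2 B h hx)).unique ⟨h, hx⟩ ⟨h', hx'⟩
    · have := oddm B h x hx
      have := evenm B' h' x hx'
      omega
    · have := evenm B h x hx
      have := oddm B' h' x hx'
      omega
    · exact (b3 x (b2 B h hx)).unique ⟨h, hx⟩ ⟨h', hx'⟩
  have hcard' : (σ ∪ σd).card = n + 1 := by
    rw [Finset.card_union_of_disjoint, hcard]
    rw [Finset.disjoint_left]
    intro B h h'
    obtain ⟨x, hx⟩ := a1 B h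
    have := oddm B h x hx
    have := evenm B h' x hx
    omega
  obtain ⟨β, ν, H⟩ := exists_arcCtx n hn (σ ∪ σd) hne hsub hpar hex huniq hnc hcard'
  obtain ⟨c, hc, hsum⟩ := H.coeffs (fun J => vFinsetWedge n (n - 1) J)
  refine ⟨c, hc, ?_⟩
  rw [← hsum]
  have e1 := H.expand_rows' (stdE n) (ExteriorAlgebra.ιMulti ℝ (n - 1))
  have e2 := H.expand_rows (stdE n) (ExteriorAlgebra.ιMulti ℝ (n - 1))
  have e3 := H.wedge_rows (stdE n) (ExteriorAlgebra.ιMulti ℝ (n - 1))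
  have e4 := H.sum_choice (fun I => finsetWedge n (n - 1) I)
  have e5 : concVec n σ σd = ExteriorAlgebra.ιMulti ℝ (n - 1) (arcRow (stdE n) β ν) := by
    rw [e2]
    refine Eq.trans ?_ e4.symm
    unfold concVec
    refine Finset.sum_congr ?_ fun _ _ => rfl
    ext I
    rw [Finset.mem_filter, Finset.mem_filter]
    refine and_congr_right fun _ => ?_
    unfold ConcordantWith relConc
    constructor
    · intro hI x h1 h2
      obtain ⟨B, hB, hx⟩ := hex x h1 h2
      obtain ⟨m, hm⟩ := Finset.card_eq_one.1 (hI B hB)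
      have hmem : ∀ y, y ∈ B ∧ y ∉ I ↔ y = m := by
        intro y
        rw [← Finset.mem_sdiff, hm, Finset.mem_singleton]
      refine ⟨m, ⟨⟨B, hB, hx, ((hmem m).2 rfl).1⟩, ((hmem m).2 rfl).2⟩, ?_⟩
      rintro y ⟨⟨B', hB', hx', hy⟩, hyI⟩
      have := huniq B hB B' hB' x hx hx'
      subst this
      exact (hmem y).1 ⟨hy, hyI⟩
    · intro hI B hB
      obtain ⟨x, hx⟩ := hne B hB
      obtain ⟨m, ⟨⟨B', hB', hx', hm⟩, hmI⟩, hu⟩ := hI x (hsub B hB x hx).1 (hsub B hB x hx).2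
      have := huniq B hB B' hB' x hx hx'
      subst this
      rw [Finset.card_eq_one]
      refine ⟨m, ?_⟩
      ext y
      rw [Finset.mem_sdiff, Finset.mem_singleton]
      constructor
      · rintro ⟨h1, h2⟩
        exact hu y ⟨⟨B, hB, hx, h1⟩, h2⟩
      · rintro rfl
        exact ⟨hm, hmI⟩
  rw [e5, ← e3, e1]
  rfl
end

section
/- Let S be an n×n real matrix, and let x, Ω(x), M(S), D, D̃, Λ_{2n} be defined from S as in the context. Assume that x is symmetric with all row sums zero, that Ω(x) has rank n−1, and that M(S) has rank n+1. Then the column space of Λ_{2n}·(M(S)·D)ᵀ equals the Λ_{2n}⁻¹-symplectic orthogonal complement {v ∈ ℝ^{2n} : Ω(x)·D̃·Λ_{2n}⁻¹·v = 0} of the row space of Ω(x)·D̃, and consequently the row space of Ω(x)·D̃ is contained in the column space of Λ_{2n}·(M(S)·D)ᵀ. -/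
open Matrix

noncomputable section

/-- The matrix `x` defined from `S` by `x_{ij} = S_{j,i} - S_{j,i-1}` (second index cyclic,
with the convention `S_{j,0} = S_{j,n}`); everything is written 0-indexed. -/
def xOf (n : ℕ) (S : Matrix (Fin n) (Fin n) ℝ) : Matrix (Fin n) (Fin n) ℝ :=
  fun a b =>
    S b a - S b (if a.val = 0 then ⟨n - 1, by have := b.isLt; omega⟩
                 else ⟨a.val - 1, by have := a.isLt; omega⟩)

/-- The `n × 2n` matrix `Ω(x)` (0-indexed reformulation of the 1-indexed description):
`Ω(x)[i,2j-1] = (-1)^{i+j} x_{ij}`, `Ω(x)[1,2] = 1`, `Ω(x)[1,2n] = (-1)^n`,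
`Ω(x)[i,2i-2] = Ω(x)[i,2i] = 1` for `2 ≤ i ≤ n`, all other even-column entries `0`. -/
def OmegaMat (n : ℕ) (x : Matrix (Fin n) (Fin n) ℝ) : Matrix (Fin n) (Fin (2 * n)) ℝ :=
  fun r c =>
    if c.val % 2 = 0 then
      (-1 : ℝ) ^ (r.val + c.val / 2) * x r ⟨c.val / 2, by have := c.isLt; omega⟩
    else if r.val = 0 then
      (if c.val = 1 then (1 : ℝ) else if c.val = 2 * n - 1 then (-1 : ℝ) ^ n else 0)
    else
      (if c.val = 2 * r.val - 1 ∨ c.val = 2 * r.val + 1 then (1 : ℝ) else 0)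

/-- The `(n+1) × 2n` matrix `M(S)`: first row `(0,1,0,1,…,0,1)`; row `i+1` has a `1` in
column `2i-1`, entries `S_{ij}` in the even columns `2j`, and `0` elsewhere. -/
def MMat (n : ℕ) (S : Matrix (Fin n) (Fin n) ℝ) : Matrix (Fin (n + 1)) (Fin (2 * n)) ℝ :=
  fun r c =>
    if r.val = 0 then (if c.val % 2 = 1 then (1 : ℝ) else 0)
    else if c.val % 2 = 1 then
      S ⟨r.val - 1, by have := r.isLt; have := c.isLt; omega⟩
        ⟨c.val / 2, by have := c.isLt; omega⟩
    else if c.val + 2 = 2 * r.val then 1 else 0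

/-- `D = diag(1,1,-1,-1,1,1,…)`. -/
def Dmat (n : ℕ) : Matrix (Fin (2 * n)) (Fin (2 * n)) ℝ :=
  Matrix.diagonal fun k => (-1 : ℝ) ^ (k.val / 2)

/-- `D̃ = diag(-1,1,-1,1,…)`, i.e. `D̃[k,k] = (-1)^k` (1-indexed). -/
def Dtil (n : ℕ) : Matrix (Fin (2 * n)) (Fin (2 * n)) ℝ :=
  Matrix.diagonal fun k => (-1 : ℝ) ^ (k.val + 1)

/-- The `2n × 2n` skew-symmetric tridiagonal matrix `Λ_{2n}` with
`Λ[i,i+1] = (-1)^{i+1}` and `Λ[i+1,i] = (-1)^i` (1-indexed). -/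
def LambdaMat (n : ℕ) : Matrix (Fin (2 * n)) (Fin (2 * n)) ℝ :=
  fun a b =>
    if b.val = a.val + 1 then (-1 : ℝ) ^ a.val
    else if a.val = b.val + 1 then (-1 : ℝ) ^ (b.val + 1)
    else 0

end
theorem Lam_mulVec (n : ℕ) (v : Fin (2 * n) → ℝ) (a : Fin (2 * n)) :
    (LambdaMat n *ᵥ v) a = (-1 : ℝ) ^ a.val *
      ((if h : a.val + 1 < 2 * n then v ⟨a.val + 1, h⟩ else 0) +
       (if h : 0 < a.val then v ⟨a.val - 1, by have := a.isLt; omega⟩ else 0)) := by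
  have key : ∀ b : Fin (2 * n), LambdaMat n a b * v b =
      (if h : a.val + 1 < 2 * n then
        (if b = ⟨a.val + 1, h⟩ then (-1 : ℝ) ^ a.val * v b else 0) else 0) +
      (if h : 0 < a.val then
        (if b = ⟨a.val - 1, by have := a.isLt; omega⟩ then (-1 : ℝ) ^ a.val * v b else 0)
        else 0) := by
    intro b
    have hb := b.isLt
    unfold LambdaMat
    by_cases h1 : b.val = a.val + 1
    · have : a.val + 1 < 2 * n := by omega
      simp [h1, this, Fin.ext_iff]
      intro h2 h3; omega
    · by_cases h2 : a.val = b.val + 1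
      · have : 0 < a.val := by omega
        have h3 : b.val = a.val - 1 := by omega
        have h4 : (b.val + 1) = a.val := by omega
        simp [h1, h3, this, Fin.ext_iff]
        rw [if_pos (by omega), show a.val - 1 + 1 = a.val by omega]
      · have h3 : ¬ (0 < a.val ∧ b.val = a.val - 1) := by omega
        simp only [h1, h2, if_false, Fin.ext_iff]
        by_cases h0 : 0 < a.val
        · have : b.val ≠ a.val - 1 := by omega
          simp [this]
        · simp [h0]
  simp only [mulVec, dotProduct]
  rw [Finset.sum_congr rfl (fun b _ => key b), Finset.sum_add_distrib, mul_add]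
  congr 1
  · split_ifs with h <;> simp
  · split_ifs with h <;> simp

theorem Lam_unit (n : ℕ) : IsUnit (LambdaMat n) := by
  rw [← Matrix.mulVec_injective_iff_isUnit]
  rw [← Matrix.coe_mulVecLin, ← LinearMap.ker_eq_bot, LinearMap.ker_eq_bot']
  intro v hv
  have hv' : ∀ a, (LambdaMat n *ᵥ v) a = 0 := fun a => by
    have := congrFun hv a
    simpa using this
  have hodd : ∀ k : ℕ, ∀ h : 2 * k + 1 < 2 * n, v ⟨2 * k + 1, h⟩ = 0 := by
    intro k
    induction k with
    | zero =>
      intro h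
      have := hv' ⟨0, by omega⟩
      rw [Lam_mulVec] at this
      simpa [show 1 < 2 * n by omega] using this
    | succ k ih =>
      intro h
      have := hv' ⟨2 * k + 2, by omega⟩
      rw [Lam_mulVec] at this
      have h2 := ih (by omega)
      simp [show 2 * k + 2 + 1 < 2 * n by omega, h2] at this
      simpa [show 2 * (k + 1) + 1 = 2 * k + 2 + 1 by ring] using this
  have heven : ∀ k : ℕ, ∀ h : k + 1 ≤ n, v ⟨2 * (n - (k + 1)), by omega⟩ = 0 := by
    intro k
    induction k with
    | zero =>
      intro h
      have := hv' ⟨2 * n - 1, by omega⟩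
      rw [Lam_mulVec] at this
      simp only [show ¬ (2 * n - 1 + 1 < 2 * n) by omega, show 0 < 2 * n - 1 by omega,
        dif_pos, dif_neg, not_false_eq_true, zero_add] at this
      have h3 : 2 * n - 1 - 1 = 2 * (n - (0 + 1)) := by omega
      simp only [h3] at this
      simpa using this
    | succ k ih =>
      intro h
      have := hv' ⟨2 * (n - (k + 2)) + 1, by omega⟩
      rw [Lam_mulVec] at this
      have h2 := ih (by omega)
      have h3 : 2 * (n - (k + 2)) + 1 + 1 = 2 * (n - (k + 1)) := by omega
      have h4 : 2 * (n - (k + 1)) < 2 * n := by omega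
      simp [h3, h4, h2] at this
      simpa using this
  funext c
  obtain ⟨c, hc⟩ := c
  rcases Nat.even_or_odd' c with ⟨k, rfl | rfl⟩
  · have := heven (n - k - 1) (by omega)
    have h3 : 2 * (n - (n - k - 1 + 1)) = 2 * k := by omega
    simpa only [h3, Pi.zero_apply] using this
  · exact hodd k hc

theorem neg_one_sq_pow (k : ℕ) : ((-1 : ℝ) ^ k) * ((-1 : ℝ) ^ k) = 1 := by
  rw [← mul_pow]; simp

/-- The products used: `Ω D̃ D Mᵀ = 0`. -/
theorem Omega_M (n : ℕ) (hn : 2 ≤ n) (S : Matrix (Fin n) (Fin n) ℝ) :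
    OmegaMat n (xOf n S) * Dtil n * (MMat n S * Dmat n)ᵀ = 0 := by
  ext r q
  have hr := r.isLt
  have hq := q.isLt
  -- the two odd columns of row r
  obtain ⟨p1, p2, hp1, hp2⟩ : ∃ p1 p2 : Fin (2 * n),
      p1.val = (if r.val = 0 then 2 * n - 1 else 2 * r.val - 1) ∧ p2.val = 2 * r.val + 1 :=
    ⟨⟨if r.val = 0 then 2 * n - 1 else 2 * r.val - 1, by split_ifs <;> omega⟩,
      ⟨2 * r.val + 1, by omega⟩, rfl, rfl⟩
  have hne : p1 ≠ p2 := by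
    intro h; rw [Fin.ext_iff, hp1, hp2] at h; split_ifs at h <;> omega
  have hodd1 : p1.val % 2 = 1 := by rw [hp1]; split_ifs <;> omega
  have hodd2 : p2.val % 2 = 1 := by omega
  have hOm : ∀ c : Fin (2 * n), c.val % 2 = 1 → OmegaMat n (xOf n S) r c =
      (if c = p1 then (if r.val = 0 then (-1 : ℝ) ^ n else 1) else 0) +
        (if c = p2 then 1 else 0) := by
    intro c hc
    unfold OmegaMat
    simp only [Fin.ext_iff, hp1, hp2]
    by_cases h0 : r.val = 0
    · simp [hc, h0]
      by_cases h1 : c.val = 1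
      · have : 1 ≠ 2 * n - 1 := by omega
        simp [h1, this]
      · simp [h1]
    · simp [hc, h0]
      by_cases h1 : c.val = 2 * r.val - 1
      · have : 2 * r.val - 1 ≠ 2 * r.val + 1 := by omega
        simp [h1, this]
      · simp [h1]
  have hs1 : (if r.val = 0 then (-1 : ℝ) ^ n else 1) * (-1 : ℝ) ^ (p1.val / 2) =
      -(-1 : ℝ) ^ r.val := by
    rw [hp1]
    split_ifs with h
    · obtain ⟨m, rfl⟩ : ∃ m, n = m + 1 := ⟨n - 1, by omega⟩
      rw [show (2 * (m + 1) - 1) / 2 = m by omega, h, pow_succ]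
      have := neg_one_sq_pow m
      simp only [pow_zero]; linarith
    · obtain ⟨m, hm⟩ : ∃ m, r.val = m + 1 := ⟨r.val - 1, by omega⟩
      rw [hm, show (2 * (m + 1) - 1) / 2 = m by omega, pow_succ]; ring
  have hs2 : (-1 : ℝ) ^ (p2.val / 2) = (-1 : ℝ) ^ r.val := by
    rw [hp2, show (2 * r.val + 1) / 2 = r.val by omega]
  have hpow : ∀ c : Fin (2 * n), c.val % 2 = 1 → (-1 : ℝ) ^ (c.val + 1) = 1 := by
    intro c hc
    exact Even.neg_one_pow (Nat.even_iff.mpr (by omega))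
  have entry : (OmegaMat n (xOf n S) * Dtil n * (MMat n S * Dmat n)ᵀ) r q =
      ∑ c, OmegaMat n (xOf n S) r c * (-1 : ℝ) ^ (c.val + 1) *
        (MMat n S q c * (-1 : ℝ) ^ (c.val / 2)) := by
    rw [Matrix.mul_apply]
    simp only [Matrix.transpose_apply, Dtil, Dmat, Matrix.mul_diagonal]
  rw [entry, Matrix.zero_apply]
  by_cases hq0 : q.val = 0
  · have key : ∀ c : Fin (2 * n), OmegaMat n (xOf n S) r c * (-1 : ℝ) ^ (c.val + 1) *
        (MMat n S q c * (-1 : ℝ) ^ (c.val / 2)) =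
        (if c = p1 then -(-1 : ℝ) ^ r.val else 0) + (if c = p2 then (-1 : ℝ) ^ r.val else 0) := by
      intro c
      by_cases hc : c.val % 2 = 1
      · rw [hOm c hc, hpow c hc]
        simp only [MMat, hq0, hc, if_true]
        by_cases h1 : c = p1
        · subst h1; simp only [if_true, if_neg hne]; linarith
        · by_cases h2 : c = p2
          · subst h2; simp only [if_true, if_neg h1]; linarith
          · simp [h1, h2]
      · have h1 : c ≠ p1 := by rintro rfl; exact hc hodd1
        have h2 : c ≠ p2 := by rintro rfl; exact hc hodd2
        simp [MMat, hq0, hc, h1, h2]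
    rw [Finset.sum_congr rfl (fun c _ => key c), Finset.sum_add_distrib]
    simp
  · obtain ⟨i, hi⟩ : ∃ i : Fin n, q.val = i.val + 1 := ⟨⟨q.val - 1, by omega⟩, by simp; omega⟩
    have hil := i.isLt
    obtain ⟨p0, hp0⟩ : ∃ p0 : Fin (2 * n), p0.val = 2 * i.val := ⟨⟨2 * i.val, by omega⟩, rfl⟩
    obtain ⟨j1, hj1⟩ : ∃ j1 : Fin n, j1.val = p1.val / 2 :=
      ⟨⟨p1.val / 2, by have := p1.isLt; omega⟩, rfl⟩
    have hx : xOf n S r i = S i r - S i j1 := by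
      unfold xOf
      congr 2
      rw [Fin.ext_iff, hj1, hp1]
      split_ifs <;> simp <;> omega
    have hModd : ∀ c : Fin (2 * n), c.val % 2 = 1 → ∀ j : Fin n, j.val = c.val / 2 →
        MMat n S q c = S i j := by
      intro c hc j hj
      simp only [MMat, hq0, hc, if_true, if_false]
      congr 1 <;> simp [Fin.ext_iff] <;> omega
    have hMev : ∀ c : Fin (2 * n), c.val % 2 = 0 → MMat n S q c = if c = p0 then 1 else 0 := by
      intro c hc
      simp only [MMat, hq0, hc, if_false, Fin.ext_iff, hp0, hi]
      simp
      congr 1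
      apply propext; omega
    have key : ∀ c : Fin (2 * n), OmegaMat n (xOf n S) r c * (-1 : ℝ) ^ (c.val + 1) *
        (MMat n S q c * (-1 : ℝ) ^ (c.val / 2)) =
        (if c = p1 then -(-1 : ℝ) ^ r.val * S i j1 else 0) +
        (if c = p2 then (-1 : ℝ) ^ r.val * S i r else 0) +
        (if c = p0 then -(-1 : ℝ) ^ r.val * xOf n S r i else 0) := by
      intro c
      by_cases hc : c.val % 2 = 1
      · have h0 : c ≠ p0 := by rintro rfl; omega
        rw [hOm c hc, hpow c hc]
        by_cases h1 : c = p1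
        · subst h1
          rw [hModd c hc j1 hj1, ← hs1]
          simp only [if_true, if_neg hne, if_neg h0]; ring
        · by_cases h2 : c = p2
          · subst h2
            rw [hModd c hc r (by omega), hs2]
            simp only [if_true, if_neg h1, if_neg h0]; ring
          · simp [h1, h2, h0]
      · have h1 : c ≠ p1 := by rintro rfl; exact hc hodd1
        have h2 : c ≠ p2 := by rintro rfl; exact hc hodd2
        have hc0 : c.val % 2 = 0 := by omega
        rw [hMev c hc0]
        by_cases h0 : c = p0
        · subst h0
          have e1 : (-1 : ℝ) ^ (c.val + 1) = -1 :=
            Odd.neg_one_pow (Nat.odd_iff.mpr (by omega))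
          have e2 : c.val / 2 = i.val := by omega
          have e3 : OmegaMat n (xOf n S) r c = (-1 : ℝ) ^ (r.val + i.val) * xOf n S r i := by
            simp only [OmegaMat, hc0, if_true, e2]
          rw [e1, e2, e3, pow_add]
          simp only [if_true, if_neg h1, if_neg h2]
          linear_combination (-(-1 : ℝ) ^ r.val * xOf n S r i) * neg_one_sq_pow i.val
        · simp [h0, h1, h2]
    rw [Finset.sum_congr rfl (fun c _ => key c), Finset.sum_add_distrib, Finset.sum_add_distrib]
    simp [hx]; ring

theorem row_mem (n : ℕ) (S : Matrix (Fin n) (Fin n) ℝ)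
    (hsymm : (xOf n S).IsSymm) (r : Fin n) (hr0 : r.val ≠ 0) :
    (OmegaMat n (xOf n S) * Dtil n) r ∈
      LinearMap.range (LambdaMat n * (MMat n S * Dmat n)ᵀ).mulVecLin := by
  have hr := r.isLt
  have hl : n - 1 < n := by omega
  refine ⟨Pi.single 0 ((-1 : ℝ) ^ r.val * S r ⟨n - 1, hl⟩) +
    Pi.single r.succ (-(-1 : ℝ) ^ r.val), ?_⟩
  rw [Matrix.mulVecLin_apply, ← Matrix.mulVec_mulVec]
  have hv : (MMat n S * Dmat n)ᵀ *ᵥ (Pi.single 0 ((-1 : ℝ) ^ r.val * S r ⟨n - 1, hl⟩) +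
    Pi.single r.succ (-(-1 : ℝ) ^ r.val)) = fun c : Fin (2 * n) =>
      (-1 : ℝ) ^ r.val * (-1 : ℝ) ^ (c.val / 2) *
      (if c.val % 2 = 1 then S r ⟨n - 1, hl⟩ - S r ⟨c.val / 2, by have := c.isLt; omega⟩
       else if c.val = 2 * r.val then -1 else 0) := by
    funext c
    rw [Matrix.mulVec_add, Matrix.mulVec_single, Matrix.mulVec_single]
    simp [Dmat, MMat]
    have : c.val + 2 = 2 * (r.val + 1) ↔ c.val = 2 * r.val := by omega
    simp only [this]
    split_ifs <;> ring
  rw [hv]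
  funext a
  have ha := a.isLt
  rw [Lam_mulVec]
  have hR : (OmegaMat n (xOf n S) * Dtil n) r a =
    OmegaMat n (xOf n S) r a * (-1 : ℝ) ^ (a.val + 1) := by
    simp [Dtil]
  rw [hR, pow_succ]
  rcases Nat.even_or_odd' a.val with ⟨k, hk | hk⟩
  · have hx : xOf n S r ⟨k, by omega⟩ = xOf n S ⟨k, by omega⟩ r := hsymm.apply _ _
    have e3 : OmegaMat n (xOf n S) r a =
        (-1 : ℝ) ^ (r.val + k) * xOf n S r ⟨k, by omega⟩ := by
      simp only [OmegaMat, show a.val % 2 = 0 by omega, show a.val / 2 = k by omega, if_true]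
    rw [e3, hx]
    have h1 : a.val + 1 < 2 * n := by omega
    simp only [h1, dif_pos, show (a.val + 1) % 2 = 1 by omega, if_true,
      show (a.val + 1) / 2 = k by omega]
    by_cases hk0 : k = 0
    · subst hk0
      simp [show ¬ 0 < a.val by omega, xOf]; ring
    · obtain ⟨m, rfl⟩ : ∃ m, k = m + 1 := ⟨k - 1, by omega⟩
      simp only [show 0 < a.val by omega, dif_pos, show (a.val - 1) % 2 = 1 by omega, if_true,
        show (a.val - 1) / 2 = m by omega]
      simp [xOf]; ring
  · have e3 : OmegaMat n (xOf n S) r a = if k + 1 = r.val ∨ k = r.val then 1 else 0 := by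
      simp only [OmegaMat, show ¬ (a.val % 2 = 0) by omega, hr0, if_false]
      congr 1; apply propext; omega
    rw [e3]
    simp only [show ¬ ((a.val + 1) % 2 = 1) by omega, show ¬ ((a.val - 1) % 2 = 1) by omega,
      show 0 < a.val by omega, if_false, dif_pos, show (a.val - 1) / 2 = k by omega,
      show (a.val + 1) / 2 = k + 1 by omega]
    by_cases h1 : k = r.val
    · simp [show a.val - 1 = 2 * r.val by omega, show a.val + 1 ≠ 2 * r.val by omega, h1,
        neg_one_sq_pow]
    · by_cases h2 : k + 1 = r.val
      · have h3 : a.val + 1 < 2 * n := by omega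
        simp [show a.val - 1 ≠ 2 * r.val by omega, show a.val + 1 = 2 * r.val by omega, h2,
          neg_one_sq_pow, hr]
      · simp [show a.val - 1 ≠ 2 * r.val by omega, show a.val + 1 ≠ 2 * r.val by omega, h1, h2]

theorem Omega_dep (n : ℕ) (hn : 2 ≤ n) (x : Matrix (Fin n) (Fin n) ℝ)
    (hsymm : x.IsSymm) (hrow : ∀ i, ∑ j, x i j = 0) (c : Fin (2 * n)) :
    ∑ r : Fin n, (-1 : ℝ) ^ r.val * OmegaMat n x r c = 0 := by
  have hc := c.isLt
  rcases Nat.even_or_odd' c.val with ⟨k, hk | hk⟩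
  · have hkn : k < n := by omega
    have key : ∀ r : Fin n, (-1 : ℝ) ^ r.val * OmegaMat n x r c =
        (-1 : ℝ) ^ k * x ⟨k, hkn⟩ r := by
      intro r
      simp only [OmegaMat, show c.val % 2 = 0 by omega, show c.val / 2 = k by omega, if_true]
      rw [hsymm.apply r ⟨k, hkn⟩ |>.symm, pow_add]
      linear_combination ((-1 : ℝ) ^ k * x ⟨k, hkn⟩ r) * neg_one_sq_pow r.val
    rw [Finset.sum_congr rfl (fun r _ => key r), ← Finset.mul_sum, hrow, mul_zero]
  · have hkn : k < n := by omega
    obtain ⟨q, hq⟩ : ∃ q : Fin n, q.val = if k + 1 < n then k + 1 else 0 :=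
      ⟨⟨if k + 1 < n then k + 1 else 0, by split_ifs <;> omega⟩, rfl⟩
    have key : ∀ r : Fin n, (-1 : ℝ) ^ r.val * OmegaMat n x r c =
        (if r = ⟨k, hkn⟩ then (-1 : ℝ) ^ k else 0) + (if r = q then -(-1 : ℝ) ^ k else 0) := by
      intro r
      have hr := r.isLt
      simp only [OmegaMat, show ¬ (c.val % 2 = 0) by omega, if_false, Fin.ext_iff, hq]
      by_cases hr0 : r.val = 0
      · by_cases hk0 : k = 0
        · simp [hr0, hk, hk0, show 1 < n by omega]
        · by_cases hk1 : k + 1 < n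
          · simp [hr0, hk, hk0, hk1, Ne.symm hk0]; omega
          · obtain rfl : n = k + 1 := by omega
            simp [hr0, hk, hk0, Ne.symm hk0, pow_succ, show 2 * (k + 1) - 1 = 2 * k + 1 by omega]
      · by_cases h1 : r.val = k
        · have : ¬ (r.val = if k + 1 < n then k + 1 else 0) := by split_ifs <;> omega
          rw [if_neg hr0, if_pos (by omega), if_pos h1, if_neg this, h1]; ring
        · by_cases h2 : r.val = k + 1
          · have : (r.val = if k + 1 < n then k + 1 else 0) := by split_ifs <;> omega
            rw [if_neg hr0, if_pos (by omega), if_neg h1, if_pos this, h2]; ring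
          · have : ¬ (r.val = if k + 1 < n then k + 1 else 0) := by split_ifs <;> omega
            rw [if_neg hr0, if_neg (by omega), if_neg h1, if_neg this]; ring
    rw [Finset.sum_congr rfl (fun r _ => key r), Finset.sum_add_distrib]
    simp

theorem Dtil_det (n : ℕ) : IsUnit (Dtil n).det := by
  rw [Dtil, Matrix.det_diagonal, isUnit_iff_ne_zero, Finset.prod_ne_zero_iff]
  intro i _; positivity

theorem Dmat_det (n : ℕ) : IsUnit (Dmat n).det := by
  rw [Dmat, Matrix.det_diagonal, isUnit_iff_ne_zero, Finset.prod_ne_zero_iff]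
  intro i _; positivity

theorem symplectic_complement_inclusion (n : ℕ) (hn : 2 ≤ n) (S : Matrix (Fin n) (Fin n) ℝ)
    (hsymm : (xOf n S).IsSymm) (hrow : ∀ i, ∑ j, xOf n S i j = 0)
    (hrankOmega : (OmegaMat n (xOf n S)).rank = n - 1)
    (hrankM : (MMat n S).rank = n + 1) :
    LinearMap.range (LambdaMat n * (MMat n S * Dmat n)ᵀ).mulVecLin =
      LinearMap.ker (OmegaMat n (xOf n S) * Dtil n * (LambdaMat n)⁻¹).mulVecLin ∧
    LinearMap.range ((OmegaMat n (xOf n S) * Dtil n)ᵀ).mulVecLin ≤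
      LinearMap.range (LambdaMat n * (MMat n S * Dmat n)ᵀ).mulVecLin := by
  have hL := Lam_unit n
  have hLd : IsUnit (LambdaMat n).det := (Matrix.isUnit_iff_isUnit_det _).mp hL
  constructor
  · apply Submodule.eq_of_le_of_finrank_eq
    · rintro _ ⟨w, rfl⟩
      rw [LinearMap.mem_ker, Matrix.mulVecLin_apply, Matrix.mulVecLin_apply, Matrix.mulVec_mulVec,
        Matrix.mul_assoc, Matrix.nonsing_inv_mul_cancel_left _ _ hLd, Omega_M n hn S,
        Matrix.zero_mulVec]
    · have h1 : Module.finrank ℝ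
          (LinearMap.range (LambdaMat n * (MMat n S * Dmat n)ᵀ).mulVecLin) = n + 1 := by
        change (LambdaMat n * (MMat n S * Dmat n)ᵀ).rank = n + 1
        rw [Matrix.rank_mul_eq_right_of_isUnit_det _ _ hLd, Matrix.rank_transpose,
          Matrix.rank_mul_eq_left_of_isUnit_det _ _ (Dmat_det n), hrankM]
      have h2 : Module.finrank ℝ (LinearMap.range
          (OmegaMat n (xOf n S) * Dtil n * (LambdaMat n)⁻¹).mulVecLin) = n - 1 := by
        change (OmegaMat n (xOf n S) * Dtil n * (LambdaMat n)⁻¹).rank = n - 1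
        rw [Matrix.rank_mul_eq_left_of_isUnit_det _ _ (Matrix.isUnit_nonsing_inv_det _ hLd),
          Matrix.rank_mul_eq_left_of_isUnit_det _ _ (Dtil_det n), hrankOmega]
      have h3 := LinearMap.finrank_range_add_finrank_ker
        (OmegaMat n (xOf n S) * Dtil n * (LambdaMat n)⁻¹).mulVecLin
      rw [h2, Module.finrank_fin_fun] at h3
      omega
  · have hrows : ∀ r : Fin n, (OmegaMat n (xOf n S) * Dtil n) r ∈
        LinearMap.range (LambdaMat n * (MMat n S * Dmat n)ᵀ).mulVecLin := by
      intro r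
      by_cases hr0 : r.val = 0
      · have heq : (OmegaMat n (xOf n S) * Dtil n) r =
            -∑ q ∈ Finset.univ.erase r, (-1 : ℝ) ^ q.val • (OmegaMat n (xOf n S) * Dtil n) q := by
          funext c
          have hd := Omega_dep n hn _ hsymm hrow c
          rw [← Finset.add_sum_erase _ _ (Finset.mem_univ r), hr0] at hd
          simp only [Pi.neg_apply, Finset.sum_apply, Pi.smul_apply, smul_eq_mul, Dtil,
            Matrix.mul_diagonal, ← mul_assoc, ← Finset.sum_mul]
          linear_combination (-1 : ℝ) ^ (c.val + 1) * hd
        rw [heq]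
        refine Submodule.neg_mem _ (Submodule.sum_mem _ fun q hq => Submodule.smul_mem _ _ ?_)
        refine row_mem n S hsymm q fun h => (Finset.mem_erase.mp hq).1 (Fin.ext (by omega))
      · exact row_mem n S hsymm r hr0
    rw [Matrix.range_mulVecLin, Submodule.span_le]
    rintro _ ⟨r, rfl⟩
    exact hrows r
end
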